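/- Complete induction (rule q) is admissible in the calculus N: for every ℕ-indexed family of formulas (𝔄(n))ₙ∈ℕ, if for every n the sequent 𝔄(n) → 𝔄(n+1) is derivable in N, then for every m the sequent 𝔄(1) → 𝔄(m) is derivable in N, and consequently the sequent 𝔄(1) → (x)𝔄(x) is derivable in N (here 𝔄(1) denotes the first member of the family). -/

import Mathlib

/-!
Since `v` decides every prime formula, every formula of N has a definite truth value, and N is
sound and complete for it. Soundness (`NDer.sound`) is an induction on derivations. Completeness is
an induction on formulas: a true `A` gives a derivable `→ A` (`NDer.of_holds`), a false `A` gives a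
derivable `A → C` for every right side `C` (`NDer.of_not_holds`); the ω-rule is what handles true
universal formulas. Hence `A → B` is derivable as soon as the truth of `A` implies that of `B`,
and the claim reduces to ordinary induction on truth values, with no need for cut elimination.
-/

/-- Formulas of the calculus N over a set `Φ` of prime formulas:
prime formulas, conjunctions, negations, and formal universal
quantifications over ℕ-indexed families. -/
inductive Fml (Φ : Type) : Type
  | prime : Φ → Fml Φ
  | conj : Fml Φ → Fml Φ → Fml Φ
  | neg : Fml Φ → Fml Φ
  | all : (ℕ → Fml Φ) → Fml Φ

/-- The finite conjunction of formulas represented by a formula: a left side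
`𝔄₁ ∧ ⋯ ∧ 𝔄ₘ` is regarded up to order and association (rules (h) and (i)),
so it is the multiset of its top-level conjuncts. -/
def Fml.parts {Φ : Type} : Fml Φ → Multiset (Fml Φ)
  | .conj A B => A.parts + B.parts
  | A => {A}

/-- Derivability of sequents in the calculus N over the prime formulas `Φ`
with valuation `v`. A sequent has a left side which is a finite conjunction
(a multiset, possibly empty) of formulas and a right side which is a formula
or empty (`none`). Exchange and associativity of conjunction on the left
(rules (h) and (i)) are built into the multiset representation. -/
inductive NDer {Φ : Type} (v : Φ → Prop) : Multiset (Fml Φ) → Option (Fml Φ) → Prop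
  /-- basic sequents `P → Q` whenever `v P` implies `v Q`. -/
  | basicPQ {P Q : Φ} : (v P → v Q) → NDer v {Fml.prime P} (some (Fml.prime Q))
  /-- basic sequents `→ P` whenever `v P` holds. -/
  | basicT {P : Φ} : v P → NDer v 0 (some (Fml.prime P))
  /-- basic sequents `P →` whenever `v P` fails. -/
  | basicF {P : Φ} : ¬ v P → NDer v {Fml.prime P} none
  /-- rule (a): from `ℭ → 𝔄` and `ℭ → 𝔅` infer `ℭ → 𝔄 ∧ 𝔅`. -/
  | ruleA {Γ : Multiset (Fml Φ)} {A B : Fml Φ} :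
      NDer v Γ (some A) → NDer v Γ (some B) → NDer v Γ (some (Fml.conj A B))
  /-- rule (b): from `𝔄 ∧ ℭ →` infer `ℭ → 𝔄̄`. -/
  | ruleB {Γ : Multiset (Fml Φ)} {A : Fml Φ} :
      NDer v (A.parts + Γ) none → NDer v Γ (some (Fml.neg A))
  /-- rule (c), the ω-rule: from `ℭ → 𝔄(n)` for every `n` infer `ℭ → (x)𝔄(x)`. -/
  | ruleC {Γ : Multiset (Fml Φ)} {f : ℕ → Fml Φ} :
      (∀ n, NDer v Γ (some (f n))) → NDer v Γ (some (Fml.all f))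
  /-- rule (d): from `𝔄 → ℭ` infer `𝔄 ∧ 𝔅 → ℭ` (`ℭ` possibly empty). -/
  | ruleD {Γ : Multiset (Fml Φ)} {C : Option (Fml Φ)} (B : Fml Φ) :
      NDer v Γ C → NDer v (B.parts + Γ) C
  /-- rule (e): from `𝔄 → 𝔅` infer `𝔄 ∧ 𝔅̄ → ℭ` (`ℭ` possibly empty). -/
  | ruleE {Γ : Multiset (Fml Φ)} {C : Option (Fml Φ)} {B : Fml Φ} :
      NDer v Γ (some B) → NDer v (Fml.neg B ::ₘ Γ) C
  /-- rule (f): from `𝔄(n) ∧ 𝔅 → ℭ` infer `(x)𝔄(x) ∧ 𝔅 → ℭ`. -/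
  | ruleF {Γ : Multiset (Fml Φ)} {C : Option (Fml Φ)} {f : ℕ → Fml Φ} (n : ℕ) :
      NDer v ((f n).parts + Γ) C → NDer v (Fml.all f ::ₘ Γ) C
  /-- rule (g), contraction: from `𝔄 ∧ 𝔄 ∧ 𝔅 → ℭ` infer `𝔄 ∧ 𝔅 → ℭ`. -/
  | ruleG {Γ : Multiset (Fml Φ)} {C : Option (Fml Φ)} {A : Fml Φ} :
      NDer v (A.parts + A.parts + Γ) C → NDer v (A.parts + Γ) C

/-- The truth value of a formula under the valuation `v` of the prime formulas. -/
def Fml.Holds {Φ : Type} (v : Φ → Prop) : Fml Φ → Prop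
  | .prime P => v P
  | .conj A B => A.Holds v ∧ B.Holds v
  | .neg A => ¬ A.Holds v
  | .all f => ∀ n, (f n).Holds v

theorem Fml.holds_parts {Φ : Type} (v : Φ → Prop) (A : Fml Φ) :
    (∀ X ∈ A.parts, X.Holds v) ↔ A.Holds v := by
  induction A with
  | conj A B ihA ihB =>
    simp only [Fml.parts, Multiset.mem_add, or_imp, forall_and, ihA, ihB, Fml.Holds]
  | _ => simp [Fml.parts]

/-- Soundness; an empty right side counts as falsity. -/
theorem NDer.sound {Φ : Type} {v : Φ → Prop} {Γ : Multiset (Fml Φ)} {C : Option (Fml Φ)}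
    (h : NDer v Γ C) : (∀ X ∈ Γ, X.Holds v) → C.elim False (Fml.Holds v) := by
  induction h with
  | basicPQ h => simpa [Fml.Holds] using h
  | basicT h => simpa [Fml.Holds] using h
  | basicF h => simpa [Fml.Holds] using h
  | ruleA _ _ ihA ihB => exact fun hΓ => ⟨ihA hΓ, ihB hΓ⟩
  | ruleB _ ih =>
    simp only [Multiset.mem_add, or_imp, forall_and, Fml.holds_parts] at ih
    exact fun hΓ hA => ih ⟨hA, hΓ⟩
  | ruleC _ ih => exact fun hΓ n => ih n hΓ
  | ruleD B _ ih => exact fun hΓ => ih fun X hX => hΓ X (Multiset.mem_add.2 (.inr hX))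
  | ruleE _ ih =>
    intro hΓ
    simp only [Multiset.mem_cons, forall_eq_or_imp] at hΓ
    exact absurd (ih hΓ.2) hΓ.1
  | ruleF n _ ih =>
    intro hΓ
    simp only [Multiset.mem_cons, forall_eq_or_imp] at hΓ
    simp only [Multiset.mem_add, or_imp, forall_and, Fml.holds_parts] at ih
    exact ih ⟨hΓ.1 n, hΓ.2⟩
  | ruleG _ ih =>
    intro hΓ
    apply ih
    simpa only [Multiset.mem_add, or_self] using hΓ

/-- A false prime formula on the left yields any right side. The calculus has no weakening on the
right, so the right side is built up from the basic sequents. -/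
theorem NDer.of_not_prime {Φ : Type} {v : Φ → Prop} {P : Φ} (hP : ¬ v P) (C : Option (Fml Φ)) :
    NDer v {Fml.prime P} C := by
  cases C with
  | none => exact .basicF hP
  | some C =>
    induction C with
    | prime Q => exact .basicPQ fun h => absurd h hP
    | conj A B ihA ihB => exact .ruleA ihA ihB
    | neg A _ => exact .ruleB (.ruleD A (.basicF hP))
    | all f ih => exact .ruleC ih

/-- Completeness: true formulas are derivable from the empty left side, and false formulas on the
left yield any right side. Both halves are proved together because negation swaps them. -/
theorem NDer.complete {Φ : Type} {v : Φ → Prop} (A : Fml Φ) :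
    (A.Holds v → NDer v 0 (some A)) ∧ (¬ A.Holds v → ∀ C, NDer v A.parts C) := by
  induction A with
  | prime P => exact ⟨fun h => .basicT h, fun h => NDer.of_not_prime h⟩
  | conj A B ihA ihB =>
    refine ⟨fun h => .ruleA (ihA.1 h.1) (ihB.1 h.2), fun h C => ?_⟩
    by_cases hA : A.Holds v
    · exact .ruleD A (ihB.2 (fun hB => h ⟨hA, hB⟩) C)
    · rw [Fml.parts, add_comm]
      exact .ruleD B (ihA.2 hA C)
  | neg A ih =>
    exact ⟨fun h => .ruleB (by simpa using ih.2 h none),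
      fun h C => .ruleE (Γ := 0) (ih.1 (not_not.1 h))⟩
  | all f ih =>
    refine ⟨fun h => .ruleC fun n => (ih n).1 (h n), fun h C => ?_⟩
    obtain ⟨n, hn⟩ := not_forall.1 h
    exact .ruleF (Γ := 0) n (by simpa using (ih n).2 hn C)

theorem NDer.of_holds {Φ : Type} {v : Φ → Prop} {A : Fml Φ} (h : A.Holds v) :
    NDer v 0 (some A) := (NDer.complete A).1 h

theorem NDer.of_not_holds {Φ : Type} {v : Φ → Prop} {A : Fml Φ} (h : ¬ A.Holds v)
    (C : Option (Fml Φ)) : NDer v A.parts C := (NDer.complete A).2 h C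

/-- Complete induction (rule q) is admissible in the calculus N: for every
ℕ-indexed family of formulas `(𝔄(n))`, if for every `n` the sequent
`𝔄(n) → 𝔄(n+1)` is derivable in N, then for every `m` the sequent
`𝔄(1) → 𝔄(m)` is derivable in N, and consequently the sequent
`𝔄(1) → (x)𝔄(x)` is derivable in N (here `𝔄(1)`, the first member of the
family, is `f 0`). -/
theorem complete_induction_admissible {Φ : Type} (v : Φ → Prop)
    (f : ℕ → Fml Φ)
    (h : ∀ n, NDer v (f n).parts (some (f (n + 1)))) :
    (∀ m, NDer v (f 0).parts (some (f m))) ∧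
    NDer v (f 0).parts (some (Fml.all f)) := by
  have key : ∀ m, (f 0).Holds v → (f m).Holds v := by
    intro m h0
    induction m with
    | zero => exact h0
    | succ k ih => exact (h k).sound ((Fml.holds_parts v (f k)).2 ih)
  have hm : ∀ m, NDer v (f 0).parts (some (f m)) := by
    intro m
    by_cases h0 : (f 0).Holds v
    · simpa using NDer.ruleD (f 0) (NDer.of_holds (key m h0))
    · exact NDer.of_not_holds h0 _
  exact ⟨hm, .ruleC hm⟩
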